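/- arXiv:0903.0156 — 2 statements merged into one kernel-verified Lean document; each statement's English description precedes it below -/
import Mathlib

section
/- The algebra endomorphism V of A restricts to a surjective F_2-algebra homomorphism V_bo : B → Z. -/
open MvPolynomial

noncomputable section

/-- The dual Steenrod algebra at p = 2: the polynomial algebra `F₂[ζ₁, ζ₂, …]`
over `F₂ = ZMod 2` with variables indexed by the positive integers. -/
abbrev DualSteenrod : Type := MvPolynomial ℕ+ (ZMod 2)

/-- The weight of the monomial `ζ^I`: `ω(ζ^I) = Σᵢ Iᵢ · 2^(i-1)`. -/
def wt (I : ℕ+ →₀ ℕ) : ℕ := I.sum fun i e => e * 2 ^ ((i : ℕ) - 1)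

/-- The degree of the monomial `ζ^I`: `deg(ζ^I) = Σᵢ Iᵢ · (2^i − 1)`,
coming from the grading `deg(ζᵢ) = 2^i − 1`. -/
def degW (I : ℕ+ →₀ ℕ) : ℕ := I.sum fun i e => e * (2 ^ (i : ℕ) - 1)

/-- Exponent condition cutting out `T = H_* tmf`: `8 ∣ I₁`, `4 ∣ I₂`, `2 ∣ I₃`. -/
def Tcond (I : ℕ+ →₀ ℕ) : Prop := 8 ∣ I 1 ∧ 4 ∣ I 2 ∧ 2 ∣ I 3

/-- Exponent condition cutting out `B = H_* bo`: `4 ∣ I₁`, `2 ∣ I₂`. -/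
def Bcond (I : ℕ+ →₀ ℕ) : Prop := 4 ∣ I 1 ∧ 2 ∣ I 2

/-- Exponent condition cutting out `Z = H_* HZ`: `2 ∣ I₁`. -/
def Zcond (I : ℕ+ →₀ ℕ) : Prop := 2 ∣ I 1

/-- `T = H_* tmf`: the `F₂`-span of the monomials `ζ^I` with `8 ∣ I₁`, `4 ∣ I₂`, `2 ∣ I₃`. -/
def Tsub : Submodule (ZMod 2) DualSteenrod :=
  Submodule.span (ZMod 2) {m | ∃ I, Tcond I ∧ m = monomial I (1 : ZMod 2)}

/-- `B = H_* bo`: the `F₂`-span of the monomials `ζ^I` with `4 ∣ I₁`, `2 ∣ I₂`. -/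
def Bsub : Submodule (ZMod 2) DualSteenrod :=
  Submodule.span (ZMod 2) {m | ∃ I, Bcond I ∧ m = monomial I (1 : ZMod 2)}

/-- `Z = H_* HZ`: the `F₂`-span of the monomials `ζ^I` with `2 ∣ I₁`. -/
def Zsub : Submodule (ZMod 2) DualSteenrod :=
  Submodule.span (ZMod 2) {m | ∃ I, Zcond I ∧ m = monomial I (1 : ZMod 2)}

/-- The `F₂`-algebra homomorphism `V : A → A` with `V(ζ₁) = 1` and
`V(ζᵢ) = ζ_{i−1}` for `i ≥ 2`. -/
def V : DualSteenrod →ₐ[ZMod 2] DualSteenrod :=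
  aeval fun i : ℕ+ => if i = 1 then 1 else X (i - 1)

/-- `N^tmf_{8i}`: the `F₂`-span of the monomials of `T` of weight `8i`. -/
def Ntmf (i : ℕ) : Submodule (ZMod 2) DualSteenrod :=
  Submodule.span (ZMod 2) {m | ∃ I, Tcond I ∧ wt I = 8 * i ∧ m = monomial I (1 : ZMod 2)}

/-- `N^bo_{4j}`: the `F₂`-span of the monomials of `B` of weight `4j`. -/
def Nbo (j : ℕ) : Submodule (ZMod 2) DualSteenrod :=
  Submodule.span (ZMod 2) {m | ∃ I, Bcond I ∧ wt I = 4 * j ∧ m = monomial I (1 : ZMod 2)}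

/-- `N^Z_{2k}`: the `F₂`-span of the monomials of `Z` of weight `2k`. -/
def NZ (k : ℕ) : Submodule (ZMod 2) DualSteenrod :=
  Submodule.span (ZMod 2) {m | ∃ I, Zcond I ∧ wt I = 2 * k ∧ m = monomial I (1 : ZMod 2)}

/-- `M_bo(4i)`: the `F₂`-span of the monomials of `B` of weight at most `4i`. -/
def Mbo (i : ℕ) : Submodule (ZMod 2) DualSteenrod :=
  Submodule.span (ZMod 2) {m | ∃ I, Bcond I ∧ wt I ≤ 4 * i ∧ m = monomial I (1 : ZMod 2)}

/-- `M_HZ(2j)`: the `F₂`-span of the monomials of `Z` of weight at most `2j`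
(the homology of the `j`-th integral Brown–Gitler spectrum). -/
def MHZ (j : ℕ) : Submodule (ZMod 2) DualSteenrod :=
  Submodule.span (ZMod 2) {m | ∃ I, Zcond I ∧ wt I ≤ 2 * j ∧ m = monomial I (1 : ZMod 2)}

/-- The degree-`d` homogeneous part of `N^tmf_{8i}` (degrees taken in `ℤ`). -/
def NtmfDeg (i : ℕ) (d : ℤ) : Submodule (ZMod 2) DualSteenrod :=
  Submodule.span (ZMod 2)
    {m | ∃ I, Tcond I ∧ wt I = 8 * i ∧ (degW I : ℤ) = d ∧ m = monomial I (1 : ZMod 2)}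

/-- The degree-`d` homogeneous part of `M_bo(4i)` (degrees taken in `ℤ`). -/
def MboDeg (i : ℕ) (d : ℤ) : Submodule (ZMod 2) DualSteenrod :=
  Submodule.span (ZMod 2)
    {m | ∃ I, Bcond I ∧ wt I ≤ 4 * i ∧ (degW I : ℤ) = d ∧ m = monomial I (1 : ZMod 2)}

/-- The degree-`d` homogeneous part of `N^bo_{4j}` (degrees taken in `ℤ`). -/
def NboDeg (j : ℕ) (d : ℤ) : Submodule (ZMod 2) DualSteenrod :=
  Submodule.span (ZMod 2)
    {m | ∃ I, Bcond I ∧ wt I = 4 * j ∧ (degW I : ℤ) = d ∧ m = monomial I (1 : ZMod 2)}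

/-- The degree-`d` homogeneous part of `M_HZ(2j)` (degrees taken in `ℤ`). -/
def MHZdeg (j : ℕ) (d : ℤ) : Submodule (ZMod 2) DualSteenrod :=
  Submodule.span (ZMod 2)
    {m | ∃ I, Zcond I ∧ wt I ≤ 2 * j ∧ (degW I : ℤ) = d ∧ m = monomial I (1 : ZMod 2)}

/-- The degree-`d` homogeneous part of `T` (degrees taken in `ℤ`). -/
def Tdeg (d : ℤ) : Submodule (ZMod 2) DualSteenrod :=
  Submodule.span (ZMod 2)
    {m | ∃ I, Tcond I ∧ (degW I : ℤ) = d ∧ m = monomial I (1 : ZMod 2)}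

/-!
Setting some variables of a polynomial ring to `1` and renaming the others injectively sends
monomials to monomials, restricting the exponents to the surviving variables. For `V` this is the
shift `I ↦ (I₂, I₃, …)`, which maps the exponents of `B` onto those of `Z`: the condition `2 ∣ I₂`
becomes `2 ∣ I₁`, and `J` is the shift of `(0, J₁, J₂, …)`, where `4 ∣ 0`.
-/

section General

variable {R σ τ : Type*} [CommSemiring R]

lemma map_monomial_eq_monomial_comapDomain {f : σ → τ} (hf : Function.Injective f)
    (φ : MvPolynomial τ R →ₐ[R] MvPolynomial σ R) (hX : ∀ i, φ (X (f i)) = X i)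
    (hone : ∀ j ∉ Set.range f, φ (X j) = 1) (I : τ →₀ ℕ) (r : R) :
    φ (monomial I r) = monomial (I.comapDomain f hf.injOn) r := by
  have hprod : ∏ i ∈ I.support.preimage f hf.injOn, φ (X (f i)) ^ I (f i) =
      ∏ j ∈ I.support, φ (X j) ^ I j :=
    Finset.prod_preimage f I.support hf.injOn (fun j => φ (X j) ^ I j)
      fun j _ hj => by rw [hone j hj, one_pow]
  simp only [hX] at hprod
  rw [monomial_eq, monomial_eq, map_mul, map_finsuppProd, algHom_C, algebraMap_eq]
  simp only [map_pow]
  exact congrArg (C r * ·) hprod.symm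

lemma map_restrictSupport_of_map_monomial (φ : MvPolynomial τ R →ₗ[R] MvPolynomial σ R)
    {e : (τ →₀ ℕ) → σ →₀ ℕ} (he : ∀ I, φ (monomial I 1) = monomial (e I) 1)
    (S : Set (τ →₀ ℕ)) :
    (restrictSupport R S).map φ = restrictSupport R (e '' S) := by
  simp only [restrictSupport_eq_span, Submodule.map_span, Set.image_image, he]

end General

lemma Bsub_eq_restrictSupport : Bsub = restrictSupport (ZMod 2) {I | Bcond I} := by
  simp only [Bsub, restrictSupport_eq_span, Set.image, Set.mem_ofPred_eq, eq_comm]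

lemma Zsub_eq_restrictSupport : Zsub = restrictSupport (ZMod 2) {I | Zcond I} := by
  simp only [Zsub, restrictSupport_eq_span, Set.image, Set.mem_ofPred_eq, eq_comm]

/-- The exponent shift `(I₁, I₂, I₃, …) ↦ (I₂, I₃, …)`, which is the effect of `V` on monomials. -/
def exponentShift (I : ℕ+ →₀ ℕ) : ℕ+ →₀ ℕ :=
  I.comapDomain (· + 1) (add_left_injective 1).injOn

lemma one_notMem_range_add_one : (1 : ℕ+) ∉ Set.range (· + 1) := by
  rintro ⟨i, hi⟩
  exact (PNat.lt_add_left 1 i).ne' hi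

lemma V_X_one : V (X 1) = 1 := by
  simp [V]

lemma V_X_add_one (i : ℕ+) : V (X (i + 1)) = X i := by
  have hi : i + 1 ≠ 1 := fun h => one_notMem_range_add_one ⟨i, h⟩
  simp [V, hi, PNat.add_sub]

lemma V_monomial (I : ℕ+ →₀ ℕ) (r : ZMod 2) :
    V (monomial I r) = monomial (exponentShift I) r := by
  refine map_monomial_eq_monomial_comapDomain (add_left_injective 1) V V_X_add_one ?_ I r
  intro j hj
  have hj_one : j = 1 := by
    by_contra hne
    obtain ⟨i, rfl⟩ := PNat.exists_eq_succ_of_ne_one hne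
    exact hj ⟨i, rfl⟩
  rw [hj_one, V_X_one]

lemma zcond_exponentShift_iff (I : ℕ+ →₀ ℕ) : Zcond (exponentShift I) ↔ 2 ∣ I 2 :=
  Iff.rfl

lemma exponentShift_mapDomain_add_one (J : ℕ+ →₀ ℕ) :
    exponentShift (J.mapDomain (· + 1)) = J :=
  Finsupp.comapDomain_mapDomain _ (add_left_injective 1) J

lemma Zcond.bcond_mapDomain_add_one {J : ℕ+ →₀ ℕ} (hJ : Zcond J) :
    Bcond (J.mapDomain (· + 1)) := by
  constructor
  · rw [Finsupp.mapDomain_of_notMem_range J 1 one_notMem_range_add_one]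
    exact dvd_zero 4
  · rwa [← zcond_exponentShift_iff, exponentShift_mapDomain_add_one]

lemma exponentShift_image_Bcond : exponentShift '' {I | Bcond I} = {J | Zcond J} := by
  apply Set.Subset.antisymm
  · rintro _ ⟨I, hI, rfl⟩
    exact (zcond_exponentShift_iff I).mpr hI.2
  · intro J hJ
    exact ⟨J.mapDomain (· + 1), hJ.bcond_mapDomain_add_one, exponentShift_mapDomain_add_one J⟩

/-- The algebra endomorphism `V` of `A` restricts to a surjective `F₂`-algebra
homomorphism `V_bo : B → Z`: the image of `B` under `V` is exactly `Z`. -/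
theorem V_restricts_to_surjection_B_onto_Z :
    Submodule.map V.toLinearMap Bsub = Zsub := by
  rw [Bsub_eq_restrictSupport, Zsub_eq_restrictSupport, ← exponentShift_image_Bcond]
  exact map_restrictSupport_of_map_monomial V.toLinearMap (fun I => V_monomial I 1) {I | Bcond I}
end
end

section
/- As graded F_2-vector spaces, T ≅ ⊕_{0 ≤ j ≤ i} Σ^{8i+4j} M_HZ(2j); concretely, for every degree d ≥ 0 the dimension of the degree-d homogeneous part of T equals the (finite) sum over all pairs of integers 0 ≤ j ≤ i of the dimension of the degree-(d − 8i − 4j) homogeneous part of M_HZ(2j). (This is the graded vector-space content of the paper's theorem that H_* tmf ≅ ⊕_{0 ≤ j ≤ i} Σ^{8i+4j} H_* HZ_j as right A(1)-modules, where HZ_j is the j-th integral Brown–Gitler spectrum with H_* HZ_j = M_HZ(2j).) -/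
open MvPolynomial

noncomputable section

/-! Dropping the first exponent of `ζ^I` is injective on the monomials of a fixed even weight `2m`,
with image all monomials of weight at most `m`: the lost exponent is recovered from the weight.
Since `2^(k+1) - 1 = 2^k + (2^k - 1)`, it lowers the degree by exactly `2m`. Divisibility conditions
on the exponents translate into divisibility of the weight together with the conditions for the
shorter monomial. Hence `N^tmf_{8i} ≅ Σ^{8i} M_bo(4i)` and `N^bo_{4j} ≅ Σ^{4j} M_HZ(2j)`, and
decomposing `T` and `M_bo(4i)` by weight gives the splitting.
-/

section

variable {α σ R : Type*}

theorem ncard_eq_finsum_ncard_fiber {β : Type*} {s : Set α} (hs : s.Finite) (f : α → β) :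
    s.ncard = ∑ᶠ b, {a ∈ s | f a = b}.ncard := by
  classical
  have support_subset :
      (Function.support fun b => {a ∈ s | f a = b}.ncard) ⊆ (hs.toFinset.image f : Set β) := by
    intro b hb
    obtain ⟨a, ha, rfl⟩ := Set.nonempty_of_ncard_ne_zero hb
    simpa using ⟨a, ha, rfl⟩
  rw [finsum_eq_sum_of_support_subset _ support_subset, Set.ncard_eq_toFinset_card s hs,
    Finset.card_eq_sum_card_image f]
  refine Finset.sum_congr rfl fun b _ => ?_
  rw [← Set.ncard_coe_finset, Finset.coe_filter]
  simp only [Set.Finite.mem_toFinset]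

theorem ncard_eq_finsum_ncard_eq_mul {s : Set α} (hs : s.Finite) {f : α → ℕ} {n : ℕ} (hn : n ≠ 0)
    (hdvd : ∀ a ∈ s, n ∣ f a) : s.ncard = ∑ᶠ i, {a ∈ s | f a = n * i}.ncard := by
  rw [ncard_eq_finsum_ncard_fiber hs fun a => f a / n]
  refine finsum_congr fun i => congrArg Set.ncard (Set.ext fun a => and_congr_right fun ha => ?_)
  rw [Nat.div_eq_iff_eq_mul_right (Nat.pos_of_ne_zero hn) (hdvd a ha)]

theorem finite_setOf_weight_eq {w : σ → ℕ} (hw : ∀ i, w i ≠ 0) {n : ℕ}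
    (hfin : {i | w i ≤ n}.Finite) : {I : σ →₀ ℕ | Finsupp.weight w I = n}.Finite := by
  classical
  refine (Set.finite_Iic (Finsupp.indicator hfin.toFinset fun _ _ => n)).subset ?_
  rintro I rfl i
  by_cases hi : I i = 0
  · simp only [hi, zero_le]
  · have hmem : i ∈ hfin.toFinset := by
      simpa using Finsupp.le_weight_of_ne_zero' w hi
    simpa only [Finsupp.indicator_of_mem hmem] using Finsupp.le_weight w (hw i) I

theorem span_monomial_eq_restrictSupport [CommSemiring R] (P : (σ →₀ ℕ) → Prop) :
    Submodule.span R {m | ∃ I, P I ∧ m = monomial I (1 : R)} = restrictSupport R {I | P I} := by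
  simp only [restrictSupport_eq_span, Set.image, Set.mem_ofPred_eq, eq_comm]

theorem finrank_restrictSupport [CommSemiring R] [StrongRankCondition R] (s : Set (σ →₀ ℕ)) :
    Module.finrank R (restrictSupport R s) = s.ncard :=
  Module.finrank_eq_nat_card_basis (basisRestrictSupport R s)

end

/-- Drops the first exponent: `ζ₁^{I₁} ζ₂^{I₂} ζ₃^{I₃} ⋯ ↦ ζ₁^{I₂} ζ₂^{I₃} ⋯`, the effect of the
homomorphism `V` on monomials. -/
def exponentTail (I : ℕ+ →₀ ℕ) : ℕ+ →₀ ℕ :=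
  I.comapDomain (· + 1) (add_left_injective 1).injOn

/-- The inverse of `I ↦ (I₁, exponentTail I)`. -/
def exponentCons (a : ℕ) (K : ℕ+ →₀ ℕ) : ℕ+ →₀ ℕ :=
  Finsupp.single 1 a + K.mapDomain (· + 1)

@[simp]
theorem exponentTail_apply (I : ℕ+ →₀ ℕ) (k : ℕ+) : exponentTail I k = I (k + 1) := rfl

@[simp]
theorem exponentCons_one (a : ℕ) (K : ℕ+ →₀ ℕ) : exponentCons a K 1 = a := by
  have one_notMem : (1 : ℕ+) ∉ Set.range (· + 1 : ℕ+ → ℕ+) := by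
    rintro ⟨k, hk⟩
    exact (PNat.lt_add_left 1 k).ne' hk
  simp [exponentCons, Finsupp.mapDomain_of_notMem_range _ _ one_notMem]

@[simp]
theorem exponentCons_add_one (a : ℕ) (K : ℕ+ →₀ ℕ) (k : ℕ+) : exponentCons a K (k + 1) = K k := by
  have hk : (1 : ℕ+) ≠ k + 1 := (PNat.lt_add_left 1 k).ne
  simp [exponentCons, Finsupp.mapDomain_apply (add_left_injective (1 : ℕ+)),
    Finsupp.single_eq_of_ne' hk]

@[simp]
theorem exponentTail_exponentCons (a : ℕ) (K : ℕ+ →₀ ℕ) : exponentTail (exponentCons a K) = K := by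
  ext k
  rw [exponentTail_apply, exponentCons_add_one]

theorem exponentCons_exponentTail (I : ℕ+ →₀ ℕ) : exponentCons (I 1) (exponentTail I) = I := by
  ext k
  induction k using PNat.recOn with
  | one => rw [exponentCons_one]
  | succ k _ => rw [exponentCons_add_one, exponentTail_apply]

theorem weight_eq_add_weight_exponentTail (w : ℕ+ → ℕ) (I : ℕ+ →₀ ℕ) :
    Finsupp.weight w I = I 1 * w 1 + Finsupp.weight (fun k => w (k + 1)) (exponentTail I) := by
  conv_lhs =>
    rw [← exponentCons_exponentTail I, exponentCons, map_add, Finsupp.weight_single, smul_eq_mul]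
  congr 1
  exact Finsupp.linearCombination_mapDomain ℕ _ (exponentTail I)

theorem wt_eq_weight (I : ℕ+ →₀ ℕ) : wt I = Finsupp.weight (fun k : ℕ+ => 2 ^ ((k : ℕ) - 1)) I :=
  rfl

theorem degW_eq_weight (I : ℕ+ →₀ ℕ) : degW I = Finsupp.weight (fun k : ℕ+ => 2 ^ (k : ℕ) - 1) I :=
  rfl

theorem wt_eq_add_wt_exponentTail (I : ℕ+ →₀ ℕ) : wt I = I 1 + 2 * wt (exponentTail I) := by
  have two_pow_eq (k : ℕ+) : 2 ^ (k : ℕ) = 2 * 2 ^ ((k : ℕ) - 1) :=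
    (mul_pow_sub_one k.ne_zero 2).symm
  rw [wt_eq_weight, weight_eq_add_weight_exponentTail]
  simp only [PNat.add_coe, PNat.one_coe, Nat.add_sub_cancel, Nat.sub_self, pow_zero, mul_one,
    wt, Finsupp.weight_apply, smul_eq_mul, two_pow_eq, Finsupp.mul_sum, mul_left_comm]

theorem degW_eq_wt_add_degW_exponentTail (I : ℕ+ →₀ ℕ) : degW I = wt I + degW (exponentTail I) := by
  have two_pow_succ_sub_one (k : ℕ) : 2 ^ (k + 1) - 1 = 2 ^ k + (2 ^ k - 1) := by
    have := Nat.one_le_two_pow (n := k)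
    omega
  rw [degW_eq_weight I, wt_eq_weight I, weight_eq_add_weight_exponentTail _ I,
    weight_eq_add_weight_exponentTail _ I]
  simp only [PNat.add_coe, PNat.one_coe, Nat.sub_self, pow_zero, pow_one, Nat.add_one_sub_one,
    two_pow_succ_sub_one, degW, Finsupp.weight_apply, smul_eq_mul, mul_add, Finsupp.sum_add,
    add_assoc]

theorem wt_exponentCons (a : ℕ) (K : ℕ+ →₀ ℕ) : wt (exponentCons a K) = a + 2 * wt K := by
  rw [wt_eq_add_wt_exponentTail, exponentCons_one, exponentTail_exponentCons]

theorem finite_setOf_degW_eq (d : ℤ) : {I | (degW I : ℤ) = d}.Finite := by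
  have weight_ne_zero (k : ℕ+) : 2 ^ (k : ℕ) - 1 ≠ 0 :=
    (Nat.sub_pos_of_lt (Nat.one_lt_two_pow k.ne_zero)).ne'
  have finite_weight_le (n : ℕ) : {k : ℕ+ | 2 ^ (k : ℕ) - 1 ≤ n}.Finite := by
    refine (Set.finite_Iic n.succPNat).subset fun k hk => ?_
    exact Nat.lt_two_pow_self.le.trans (Nat.sub_le_iff_le_add.mp hk)
  refine (finite_setOf_weight_eq weight_ne_zero (finite_weight_le d.toNat)).subset fun I hI => ?_
  rw [Set.mem_ofPred_eq] at hI ⊢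
  rw [← degW_eq_weight, ← hI, Int.toNat_natCast]

theorem Zcond_iff_two_dvd_wt (I : ℕ+ →₀ ℕ) : Zcond I ↔ 2 ∣ wt I := by
  rw [Zcond, wt_eq_add_wt_exponentTail, Nat.dvd_add_left (Nat.dvd_mul_right 2 _)]

theorem Bcond_iff_four_dvd_wt (I : ℕ+ →₀ ℕ) : Bcond I ↔ 4 ∣ wt I ∧ Zcond (exponentTail I) := by
  have two_dvd_wt := Zcond_iff_two_dvd_wt (exponentTail I)
  have wt_eq := wt_eq_add_wt_exponentTail I
  have tail_one : exponentTail I 1 = I 2 := rfl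
  rw [Zcond, tail_one] at two_dvd_wt ⊢
  rw [Bcond]
  omega

theorem Tcond_iff_eight_dvd_wt (I : ℕ+ →₀ ℕ) : Tcond I ↔ 8 ∣ wt I ∧ Bcond (exponentTail I) := by
  have four_dvd_wt := Bcond_iff_four_dvd_wt (exponentTail I)
  have wt_eq := wt_eq_add_wt_exponentTail I
  have tail_one : exponentTail I 1 = I 2 := rfl
  have tail_two : exponentTail I 2 = I 3 := rfl
  rw [Tcond]
  rw [Bcond, tail_one, tail_two] at four_dvd_wt ⊢
  omega

theorem bijOn_exponentTail (m : ℕ) : Set.BijOn exponentTail {I | wt I = 2 * m} {K | wt K ≤ m} := by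
  refine ⟨fun I (hI : wt I = 2 * m) => ?mapsTo, fun I hI J hJ hIJ => ?injOn,
    fun K (hK : wt K ≤ m) => ?surjOn⟩
  case mapsTo =>
    have wt_I := wt_eq_add_wt_exponentTail I
    rw [Set.mem_ofPred_eq]
    omega
  case injOn =>
    have wt_I : I 1 + 2 * wt (exponentTail I) = 2 * m := (wt_eq_add_wt_exponentTail I).symm.trans hI
    have wt_J : J 1 + 2 * wt (exponentTail J) = 2 * m := (wt_eq_add_wt_exponentTail J).symm.trans hJ
    have head_eq : I 1 = J 1 := Nat.add_right_cancel (wt_I.trans (hIJ ▸ wt_J.symm))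
    rw [← exponentCons_exponentTail I, ← exponentCons_exponentTail J, head_eq, hIJ]
  case surjOn =>
    refine ⟨exponentCons (2 * m - 2 * wt K) K, ?_, exponentTail_exponentCons _ K⟩
    exact (wt_exponentCons _ K).trans (Nat.sub_add_cancel (Nat.mul_le_mul_left 2 hK))

theorem ncard_setOf_wt_eq_two_mul {m : ℕ} {P Q : (ℕ+ →₀ ℕ) → Prop}
    (hPQ : ∀ I, wt I = 2 * m → (P I ↔ Q (exponentTail I))) (d : ℤ) :
    {I | P I ∧ wt I = 2 * m ∧ (degW I : ℤ) = d}.ncard =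
      {K | Q K ∧ wt K ≤ m ∧ (degW K : ℤ) = d - 2 * m}.ncard := by
  set target := {K | Q K ∧ wt K ≤ m ∧ (degW K : ℤ) = d - 2 * m}
  have source_eq : {I | P I ∧ wt I = 2 * m ∧ (degW I : ℤ) = d} =
      {I | wt I = 2 * m} ∩ exponentTail ⁻¹' target := by
    ext I
    have degW_eq := degW_eq_wt_add_degW_exponentTail I
    have wt_tail_le : wt I = 2 * m → wt (exponentTail I) ≤ m :=
      fun hI => (bijOn_exponentTail m).mapsTo hI
    simp only [target, Set.mem_inter_iff, Set.mem_preimage, Set.mem_ofPred_eq]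
    grind
  have bijOn : Set.BijOn exponentTail ({I | wt I = 2 * m} ∩ exponentTail ⁻¹' target) target :=
    (bijOn_exponentTail m).subset_right fun _ hK => hK.2.1
  rw [source_eq, ← bijOn.injOn.ncard_image, bijOn.image_eq]

theorem Tdeg_eq_restrictSupport (d : ℤ) : Tdeg d =
    restrictSupport (ZMod 2) {I | Tcond I ∧ (degW I : ℤ) = d} := by
  simp only [Tdeg, ← span_monomial_eq_restrictSupport, and_assoc]

theorem NtmfDeg_eq_restrictSupport (i : ℕ) (d : ℤ) : NtmfDeg i d =
    restrictSupport (ZMod 2) {I | Tcond I ∧ wt I = 8 * i ∧ (degW I : ℤ) = d} := by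
  simp only [NtmfDeg, ← span_monomial_eq_restrictSupport, and_assoc]

theorem MboDeg_eq_restrictSupport (i : ℕ) (d : ℤ) : MboDeg i d =
    restrictSupport (ZMod 2) {I | Bcond I ∧ wt I ≤ 4 * i ∧ (degW I : ℤ) = d} := by
  simp only [MboDeg, ← span_monomial_eq_restrictSupport, and_assoc]

theorem NboDeg_eq_restrictSupport (j : ℕ) (d : ℤ) : NboDeg j d =
    restrictSupport (ZMod 2) {I | Bcond I ∧ wt I = 4 * j ∧ (degW I : ℤ) = d} := by
  simp only [NboDeg, ← span_monomial_eq_restrictSupport, and_assoc]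

theorem MHZdeg_eq_restrictSupport (j : ℕ) (d : ℤ) : MHZdeg j d =
    restrictSupport (ZMod 2) {I | Zcond I ∧ wt I ≤ 2 * j ∧ (degW I : ℤ) = d} := by
  simp only [MHZdeg, ← span_monomial_eq_restrictSupport, and_assoc]

theorem finrank_Tdeg_eq_finsum_NtmfDeg (d : ℤ) :
    Module.finrank (ZMod 2) (Tdeg d) = ∑ᶠ i : ℕ, Module.finrank (ZMod 2) (NtmfDeg i d) := by
  have finite_monomials : {I | Tcond I ∧ (degW I : ℤ) = d}.Finite :=
    (finite_setOf_degW_eq d).subset fun _ hI => hI.2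
  rw [Tdeg_eq_restrictSupport, finrank_restrictSupport, ncard_eq_finsum_ncard_eq_mul
    finite_monomials (by norm_num) fun I hI => ((Tcond_iff_eight_dvd_wt I).mp hI.1).1]
  refine finsum_congr fun i => ?_
  rw [NtmfDeg_eq_restrictSupport, finrank_restrictSupport]
  exact congrArg Set.ncard (Set.ext fun I => and_right_comm.trans and_assoc)

theorem finrank_NtmfDeg_eq_finrank_MboDeg (i : ℕ) (d : ℤ) :
    Module.finrank (ZMod 2) (NtmfDeg i d) = Module.finrank (ZMod 2) (MboDeg i (d - 8 * i)) := by
  have wt_eq : 8 * i = 2 * (4 * i) := by ring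
  have shift_eq : d - 8 * i = d - 2 * (4 * i : ℕ) := by push_cast; ring
  rw [NtmfDeg_eq_restrictSupport, MboDeg_eq_restrictSupport, finrank_restrictSupport,
    finrank_restrictSupport, wt_eq, shift_eq]
  refine ncard_setOf_wt_eq_two_mul (fun I hI => ?_) d
  rw [Tcond_iff_eight_dvd_wt, and_iff_right (Dvd.intro i (wt_eq.trans hI.symm))]

theorem finrank_MboDeg_eq_finsum_NboDeg (i : ℕ) (d : ℤ) : Module.finrank (ZMod 2) (MboDeg i d) =
    ∑ᶠ (j : ℕ) (_ : j ≤ i), Module.finrank (ZMod 2) (NboDeg j d) := by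
  have finite_monomials : {I | Bcond I ∧ wt I ≤ 4 * i ∧ (degW I : ℤ) = d}.Finite :=
    (finite_setOf_degW_eq d).subset fun _ hI => hI.2.2
  rw [MboDeg_eq_restrictSupport, finrank_restrictSupport, ncard_eq_finsum_ncard_eq_mul
    finite_monomials (by norm_num) fun I hI => ((Bcond_iff_four_dvd_wt I).mp hI.1).1]
  refine finsum_congr fun j => ?_
  rw [finsum_eq_if, NboDeg_eq_restrictSupport, finrank_restrictSupport]
  split_ifs with hij
  · congr 1
    ext I
    simp only [Set.mem_ofPred_eq]
    grind
  · rw [Set.ncard_eq_zero (finite_monomials.subset fun _ hI => hI.1)]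
    refine Set.eq_empty_of_forall_notMem ?_
    rintro I ⟨⟨-, wt_le, -⟩, wt_eq⟩
    omega

theorem finrank_NboDeg_eq_finrank_MHZdeg (j : ℕ) (d : ℤ) :
    Module.finrank (ZMod 2) (NboDeg j d) = Module.finrank (ZMod 2) (MHZdeg j (d - 4 * j)) := by
  have wt_eq : 4 * j = 2 * (2 * j) := by ring
  have shift_eq : d - 4 * j = d - 2 * (2 * j : ℕ) := by push_cast; ring
  rw [NboDeg_eq_restrictSupport, MHZdeg_eq_restrictSupport, finrank_restrictSupport,
    finrank_restrictSupport, wt_eq, shift_eq]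
  refine ncard_setOf_wt_eq_two_mul (fun I hI => ?_) d
  rw [Bcond_iff_four_dvd_wt, and_iff_right (Dvd.intro j (wt_eq.trans hI.symm))]

theorem finiteDimensional_Tdeg (d : ℤ) : FiniteDimensional (ZMod 2) (Tdeg d) := by
  have : Finite {I | Tcond I ∧ (degW I : ℤ) = d} :=
    (finite_setOf_degW_eq d).subset fun _ hI => hI.2
  rw [Tdeg_eq_restrictSupport]
  exact .of_basis (basisRestrictSupport (ZMod 2) _)

/-- As graded `F₂`-vector spaces, `T ≅ ⊕_{0 ≤ j ≤ i} Σ^{8i+4j} M_HZ(2j)`: for every degree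
`d ≥ 0`, the degree-`d` part of `T` is finite dimensional and its dimension equals the
(finite) sum over all pairs `0 ≤ j ≤ i` of the dimension of the degree-`(d − 8i − 4j)`
part of `M_HZ(2j)`. -/
theorem tmf_graded_dimension_splitting :
    ∀ d : ℕ,
      FiniteDimensional (ZMod 2) ↥(Tdeg (d : ℤ)) ∧
      Module.finrank (ZMod 2) ↥(Tdeg (d : ℤ)) =
        ∑ᶠ (i : ℕ) (j : ℕ) (_ : j ≤ i),
          Module.finrank (ZMod 2) ↥(MHZdeg j ((d : ℤ) - 8 * i - 4 * j)) := by
  intro d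
  refine ⟨finiteDimensional_Tdeg d, ?_⟩
  calc
    Module.finrank (ZMod 2) (Tdeg d)
      = ∑ᶠ i : ℕ, Module.finrank (ZMod 2) (NtmfDeg i d) := finrank_Tdeg_eq_finsum_NtmfDeg d
    _ = ∑ᶠ i : ℕ, Module.finrank (ZMod 2) (MboDeg i ((d : ℤ) - 8 * i)) := by
      simp only [finrank_NtmfDeg_eq_finrank_MboDeg]
    _ = ∑ᶠ (i : ℕ) (j : ℕ) (_ : j ≤ i), Module.finrank (ZMod 2) (NboDeg j ((d : ℤ) - 8 * i)) := by
      simp only [finrank_MboDeg_eq_finsum_NboDeg]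
    _ = ∑ᶠ (i : ℕ) (j : ℕ) (_ : j ≤ i),
          Module.finrank (ZMod 2) (MHZdeg j ((d : ℤ) - 8 * i - 4 * j)) := by
      simp only [finrank_NboDeg_eq_finrank_MHZdeg]
end
end
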